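/- Let ℓ ≥ 0 and let L ∈ ℤ^{(ℓ+1)×(ℓ+1)} be a matrix whose rank over ℚ equals ℓ. Suppose s, p ∈ ℤ^{ℓ+1} are column vectors satisfying sᵀL = 0 and Lp = 0, such that some entry of s equals 1. Let γ be the greatest common divisor of the entries of p, set d := sᵀp, and assume d ≠ 0. Write the characteristic polynomial of L as det(X·I_{ℓ+1} − L) = X·q(X) with q ∈ ℤ[X]. Then the torsion subgroup K of the cokernel ℤ^{ℓ+1} / (L·ℤ^{ℓ+1}) is finite and satisfies |d| · #K = γ · |q(0)|. -/

import Mathlib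

/-!
Suppose first that `s` and `p` are primitive, say `s ⬝ᵥ e = 1` and `u ⬝ᵥ p = 1`, and perturb `-L`
to `A = e uᵀ - L`. This matrix is injective because the kernel of `L` is spanned by `p`, and its
range is spanned by the range of `L` and `e = A p`. The functional induced by `s` on the cokernel
of `L` is split by the class of `e`, so its kernel is isomorphic to the cokernel of `A`. That kernel
has `|det A|` elements; being finite, it is the torsion subgroup `K`. On the other hand
`det A • p = adj(A) e = adj(-L) e`, because the columns of `A` and `-L` differ by multiples of `e`,
and `sᵀ adj(-L) = q(0) sᵀ`; pairing with `s` gives `det A * (s ⬝ᵥ p) = q(0)`. In general, divide `s`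
and `p` by the greatest common divisors of their entries.
-/

open Module

section Split

variable {R M N : Type*} [CommRing R] [AddCommGroup M] [Module R M] [AddCommGroup N] [Module R N]

lemma isCompl_span_singleton_ker (f : M →ₗ[R] R) {x : M} (hx : f x = 1) :
    IsCompl (R ∙ x) (LinearMap.ker f) := by
  refine ⟨Submodule.disjoint_def.2 fun y hy hfy ↦ ?_,
    Submodule.codisjoint_iff_exists_add_eq.2 fun y ↦ ?_⟩
  · obtain ⟨c, rfl⟩ := Submodule.mem_span_singleton.1 hy
    have hc : c = 0 := by simpa [hx] using hfy
    rw [hc, zero_smul]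
  · exact ⟨f y • x, y - f y • x, Submodule.mem_span_singleton.2 ⟨_, rfl⟩, by simp [hx],
      add_sub_cancel _ _⟩

lemma torsion_le_ker [IsTorsionFree R N] (f : M →ₗ[R] N) :
    Submodule.torsion R M ≤ LinearMap.ker f := by
  intro x hx
  obtain ⟨a, ha⟩ := (Submodule.mem_torsion_iff x).1 hx
  have hfx : (a : R) • f x = 0 := by rw [← map_smul, ← Submonoid.smul_def, ha, map_zero]
  have ha_regular : IsRegular (a : R) := isRegular_iff_mem_nonZeroDivisors.2 a.2
  exact ha_regular.isSMulRegular.right_eq_zero_of_smul hfx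

lemma range_smulRight_sub (f : M →ₗ[R] N) (υ : M →ₗ[R] R) (y : N) {x : M}
    (hfx : f x = 0) (hυx : υ x = 1) :
    LinearMap.range (υ.smulRight y - f) = LinearMap.range f ⊔ R ∙ y := by
  apply le_antisymm
  · rintro _ ⟨z, rfl⟩
    exact sub_mem (Submodule.mem_sup_right (Submodule.mem_span_singleton.2 ⟨υ z, rfl⟩))
      (Submodule.mem_sup_left ⟨z, rfl⟩)
  · refine sup_le ?_ ((Submodule.span_singleton_le_iff_mem _ _).2 ⟨x, by simp [hfx, hυx]⟩)
    rintro _ ⟨z, rfl⟩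
    exact ⟨υ z • x - z, by simp [hfx, hυx]⟩

lemma smulRight_sub_injective (f : M →ₗ[R] N) {σ : N →ₗ[R] R} {υ : M →ₗ[R] R} {x : M} {y : N}
    (hσf : σ ∘ₗ f = 0) (hσy : σ y = 1) (hυx : υ x = 1) (hker : LinearMap.ker f = R ∙ x) :
    Function.Injective (υ.smulRight y - f) := by
  refine (injective_iff_map_eq_zero _).2 fun z hz ↦ ?_
  have hfz : f z = υ z • y := (sub_eq_zero.1 hz).symm
  have hυz : υ z = 0 := by
    simpa [hfz, hσy] using LinearMap.congr_fun hσf z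
  have hz_mem : z ∈ R ∙ x := by
    rw [← hker, LinearMap.mem_ker, hfz, hυz, zero_smul]
  obtain ⟨c, rfl⟩ := Submodule.mem_span_singleton.1 hz_mem
  have hc : c = 0 := by simpa [hυx] using hυz
  rw [hc, zero_smul]

end Split

section IntegerLattice

variable {M : Type*} [AddCommGroup M]

lemma torsion_eq_ker_of_finite {N : Type*} [AddCommGroup N] [IsTorsionFree ℤ N] (f : M →ₗ[ℤ] N)
    [Finite (LinearMap.ker f)] : Submodule.torsion ℤ M = LinearMap.ker f := by
  refine le_antisymm (torsion_le_ker f) fun x hx ↦ (Submodule.mem_torsion_iff x).2 ?_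
  have hcard : (Nat.card (LinearMap.ker f) : ℤ) ≠ 0 := Nat.cast_ne_zero.2 Nat.card_pos.ne'
  refine ⟨⟨_, mem_nonZeroDivisors_of_ne_zero hcard⟩, ?_⟩
  have hx0 : Nat.card (LinearMap.ker f) • (⟨x, hx⟩ : LinearMap.ker f) = 0 := card_nsmul_eq_zero'
  simpa [Submonoid.smul_def] using congrArg Subtype.val hx0

variable [Free ℤ M] [Module.Finite ℤ M]

lemma natCard_quotient_range {f : M →ₗ[ℤ] M} (hf : Function.Injective f) :
    Nat.card (M ⧸ LinearMap.range f) = (LinearMap.det f).natAbs :=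
  (Submodule.natAbs_det_equiv _ (LinearEquiv.ofInjective f hf)).symm

lemma finite_quotient_range {f : M →ₗ[ℤ] M} (hf : Function.Injective f) :
    Finite (M ⧸ LinearMap.range f) := by
  apply Nat.finite_of_card_ne_zero
  rw [natCard_quotient_range hf, Int.natAbs_ne_zero, Ne, LinearMap.det_eq_zero_iff_ker_ne_bot,
    not_not]
  exact LinearMap.ker_eq_bot.2 hf

lemma natCard_torsion_quotient_range (f : M →ₗ[ℤ] M) {σ υ : M →ₗ[ℤ] ℤ} {x y : M}
    (hσf : σ ∘ₗ f = 0) (hσy : σ y = 1) (hυx : υ x = 1) (hker : LinearMap.ker f = ℤ ∙ x) :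
    Nat.card (Submodule.torsion ℤ (M ⧸ LinearMap.range f)) =
      (LinearMap.det (υ.smulRight y - f)).natAbs := by
  have hfx : f x = 0 := LinearMap.mem_ker.1 (hker ▸ Submodule.mem_span_singleton_self x)
  let σ' : (M ⧸ LinearMap.range f) →ₗ[ℤ] ℤ :=
    (LinearMap.range f).liftQ σ (LinearMap.range_le_ker_iff.2 hσf)
  have hcompl : IsCompl ((ℤ ∙ y).map (LinearMap.range f).mkQ) (LinearMap.ker σ') := by
    rw [Submodule.map_span, Set.image_singleton]
    exact isCompl_span_singleton_ker σ' hσy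
  let equiv : (M ⧸ LinearMap.range (υ.smulRight y - f)) ≃ₗ[ℤ] LinearMap.ker σ' :=
    Submodule.quotEquivOfEq _ _ (range_smulRight_sub f υ y hfx hυx) ≪≫ₗ
      (Submodule.quotientQuotientEquivQuotientSup _ _).symm ≪≫ₗ
      Submodule.quotientEquivOfIsCompl _ _ hcompl
  have hinj := smulRight_sub_injective f hσf hσy hυx hker
  have := finite_quotient_range hinj
  have : Finite (LinearMap.ker σ') := Finite.of_equiv _ equiv.toEquiv
  rw [torsion_eq_ker_of_finite σ', ← Nat.card_congr equiv.toEquiv, natCard_quotient_range hinj]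

end IntegerLattice

section Matrix

open Matrix Polynomial

variable {n R : Type*} [Fintype n]

lemma ker_mulVecLin_eq_span_singleton {m K : Type*} [CommRing R] [Field K] {f : R →+* K}
    (hf : Function.Injective f) {L : Matrix m n R} (hrank : (L.map f).rank + 1 = Fintype.card n)
    {u p : n → R} (hp : L *ᵥ p = 0) (hup : u ⬝ᵥ p = 1) :
    LinearMap.ker L.mulVecLin = R ∙ p := by
  have map_mem {y : n → R} (hy : L *ᵥ y = 0) : f ∘ y ∈ LinearMap.ker (L.map f).mulVecLin := by
    ext i
    simp [← RingHom.map_mulVec, hy]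
  have hfup : (f ∘ u) ⬝ᵥ (f ∘ p) = 1 := by rw [← RingHom.map_dotProduct, hup, map_one]
  have hfp : f ∘ p ≠ 0 := by
    intro h
    simp [h] at hfup
  have hfinrank : finrank K (LinearMap.ker (L.map f).mulVecLin) = 1 := by
    have := LinearMap.finrank_range_add_finrank_ker (L.map f).mulVecLin
    rw [finrank_fintype_fun_eq_card, ← Matrix.rank] at this
    omega
  refine le_antisymm (fun x hx ↦ ?_) ((Submodule.span_singleton_le_iff_mem _ _).2 hp)
  obtain ⟨c, hc⟩ := (finrank_eq_one_iff_of_nonzero' ⟨f ∘ p, map_mem hp⟩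
    (by simpa using hfp)).1 hfinrank ⟨f ∘ x, map_mem hx⟩
  have hcx : c • (f ∘ p) = f ∘ x := congrArg Subtype.val hc
  have hc_eq : f (u ⬝ᵥ x) = c := by
    rw [RingHom.map_dotProduct, ← hcx, dotProduct_smul, hfup, smul_eq_mul, mul_one]
  refine Submodule.mem_span_singleton.2 ⟨u ⬝ᵥ x, funext fun i ↦ hf ?_⟩
  simpa [hc_eq] using congrFun hcx i

variable [DecidableEq n] [CommRing R]

lemma adjugate_add_vecMulVec_mulVec (A : Matrix n n R) (v w : n → R) :
    (A + vecMulVec v w).adjugate *ᵥ v = A.adjugate *ᵥ v := by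
  ext j
  rw [← cramer_eq_adjugate_mulVec, ← cramer_eq_adjugate_mulVec, cramer_apply, cramer_apply,
    ← det_transpose, ← det_transpose (A.updateCol j v)]
  refine det_eq_of_forall_row_eq_smul_add_const (Function.update w j 0) j (by simp) fun i k ↦ ?_
  by_cases hij : i = j
  · simp [hij]
  · simp [hij, vecMulVec_apply, mul_comm]

lemma vecMul_adjugate_neg_of_vecMul_eq_zero {L : Matrix n n R} {s : n → R} (hs : s ᵥ* L = 0) :
    s ᵥ* (-L).adjugate = L.charpoly.coeff 1 • s := by
  have hcharmatrix : (C ∘ s) ᵥ* L.charmatrix = (X : R[X]) • (C ∘ s) := by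
    have : (C ∘ s) ᵥ* C.mapMatrix L = 0 := by
      ext1 j
      simpa [hs] using (RingHom.map_vecMul C L s j).symm
    rw [charmatrix, vecMul_sub, this, sub_zero, scalar_apply]
    ext1 j
    simp [vecMul_diagonal]
  have hadjugate : (X : R[X]) • ((C ∘ s) ᵥ* L.charmatrix.adjugate) = L.charpoly • (C ∘ s) := by
    rw [← smul_vecMul, ← hcharmatrix, vecMul_vecMul, mul_adjugate, vecMul_smul, vecMul_one,
      charpoly]
  have hconst : constantCoeff.mapMatrix L.charmatrix = -L := by
    ext i j
    by_cases hij : i = j <;> simp [hij]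
  have hconst_comp : constantCoeff ∘ (C ∘ s) = s := by
    ext j
    simp
  ext j
  calc (s ᵥ* (-L).adjugate) j
      = constantCoeff (((C ∘ s) ᵥ* L.charmatrix.adjugate) j) := by
        rw [RingHom.map_vecMul, hconst_comp, ← RingHom.mapMatrix_apply, RingHom.map_adjugate,
          hconst]
    _ = coeff (((X : R[X]) • ((C ∘ s) ᵥ* L.charmatrix.adjugate)) j) 1 := by
        simp [constantCoeff_apply]
    _ = (L.charpoly.coeff 1 • s) j := by
        rw [hadjugate]
        simp

lemma det_vecMulVec_sub_mul_dotProduct {L : Matrix n n R} {s p e u : n → R} (hs : s ᵥ* L = 0)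
    (hp : L *ᵥ p = 0) (hse : s ⬝ᵥ e = 1) (hup : u ⬝ᵥ p = 1) :
    (vecMulVec e u - L).det * (s ⬝ᵥ p) = L.charpoly.coeff 1 := by
  have hAp : (vecMulVec e u - L) *ᵥ p = e := by
    rw [sub_mulVec, hp, sub_zero, vecMulVec_mulVec, hup, MulOpposite.op_one, one_smul]
  have hdet : (vecMulVec e u - L).det • p = (-L).adjugate *ᵥ e := by
    rw [← adjugate_add_vecMulVec_mulVec (-L) e u, neg_add_eq_sub, ← one_mulVec p, ← smul_mulVec,
      ← adjugate_mul, ← mulVec_mulVec, hAp]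
  calc (vecMulVec e u - L).det * (s ⬝ᵥ p)
      = s ⬝ᵥ ((-L).adjugate *ᵥ e) := by rw [← hdet, dotProduct_smul, smul_eq_mul]
    _ = L.charpoly.coeff 1 := by
      rw [dotProduct_mulVec, vecMul_adjugate_neg_of_vecMul_eq_zero hs, smul_dotProduct, hse,
        smul_eq_mul, mul_one]

end Matrix

lemma exists_eq_gcd_smul_and_dotProduct_eq_one {n R : Type*} [Fintype n] [Nonempty n] [CommRing R]
    [IsBezout R] [NormalizedGCDMonoid R] (v : n → R) :
    ∃ w u : n → R, v = Finset.univ.gcd v • w ∧ u ⬝ᵥ w = 1 := by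
  obtain ⟨w, hvw, hw⟩ := Finset.univ.extract_gcd v Finset.univ_nonempty
  obtain ⟨u, hu⟩ := Finset.univ.gcd_eq_sum_mul w
  refine ⟨w, u, funext fun i ↦ hvw i (Finset.mem_univ i), ?_⟩
  rw [dotProduct_comm, dotProduct, ← hu, hw]

lemma gcd_eq_one_of_exists_eq_one {n R : Type*} [Fintype n] [CommMonoidWithZero R]
    [NormalizedGCDMonoid R] {v : n → R} (hv : ∃ i, v i = 1) : Finset.univ.gcd v = 1 := by
  obtain ⟨i, hi⟩ := hv
  have hunit : IsUnit (Finset.univ.gcd v) :=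
    isUnit_of_dvd_one (hi ▸ Finset.gcd_dvd (Finset.mem_univ i))
  rw [← Finset.normalize_gcd, normalize_eq_one.2 hunit]

section IntegerMatrix

open Matrix

variable {n : Type*} [Fintype n] [DecidableEq n]

lemma natAbs_dotProduct_mul_natCard_torsion {L : Matrix n n ℤ}
    (hrank : (L.map ((↑) : ℤ → ℚ)).rank + 1 = Fintype.card n) {s p e u : n → ℤ}
    (hs : s ᵥ* L = 0) (hp : L *ᵥ p = 0) (hse : s ⬝ᵥ e = 1) (hup : u ⬝ᵥ p = 1) :
    (s ⬝ᵥ p).natAbs *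
        Nat.card (Submodule.torsion ℤ ((n → ℤ) ⧸ LinearMap.range L.mulVecLin)) =
      (L.charpoly.coeff 1).natAbs := by
  have hker : LinearMap.ker L.mulVecLin = ℤ ∙ p :=
    ker_mulVecLin_eq_span_singleton (f := Int.castRingHom ℚ) Int.cast_injective hrank hp hup
  have hσ : dotProductBilin ℤ ℤ s ∘ₗ L.mulVecLin = 0 :=
    LinearMap.ext fun x ↦ by simp [dotProduct_mulVec, hs]
  have htoLin : (dotProductBilin ℤ ℤ u).smulRight e - L.mulVecLin = toLin' (vecMulVec e u - L) := by
    ext; simp [vecMulVec_apply, mul_comm]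
  rw [natCard_torsion_quotient_range L.mulVecLin (υ := dotProductBilin ℤ ℤ u) hσ hse hup hker,
    htoLin, LinearMap.det_toLin', ← Int.natAbs_mul, mul_comm,
    det_vecMulVec_sub_mul_dotProduct hs hp hse hup]

theorem stmt3_general (L : Matrix n n ℤ) (hrank : (L.map ((↑) : ℤ → ℚ)).rank + 1 = Fintype.card n)
    {s p : n → ℤ} (hs : s ᵥ* L = 0) (hp : L *ᵥ p = 0) {q : Polynomial ℤ}
    (hq : L.charpoly = Polynomial.X * q) :
    Finite (Submodule.torsion ℤ ((n → ℤ) ⧸ LinearMap.range L.mulVecLin)) ∧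
    (s ⬝ᵥ p).natAbs *
        Nat.card (Submodule.torsion ℤ ((n → ℤ) ⧸ LinearMap.range L.mulVecLin)) =
      (Finset.univ.gcd s * Finset.univ.gcd p * q.eval 0).natAbs := by
  refine ⟨finite_of_fg_torsion _ Submodule.torsion_isTorsion, ?_⟩
  have : Nonempty n := Fintype.card_pos_iff.1 (hrank ▸ Nat.succ_pos _)
  obtain ⟨s', e, hs', hse⟩ := exists_eq_gcd_smul_and_dotProduct_eq_one s
  obtain ⟨p', u, hp', hup⟩ := exists_eq_gcd_smul_and_dotProduct_eq_one p
  set σ := Finset.univ.gcd s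
  set γ := Finset.univ.gcd p
  have hdot : s ⬝ᵥ p = σ * γ * (s' ⬝ᵥ p') := by
    rw [hs', hp', smul_dotProduct, dotProduct_smul, smul_eq_mul, smul_eq_mul, mul_assoc]
  have hq0 : L.charpoly.coeff 1 = q.eval 0 := by
    rw [hq, Polynomial.coeff_X_mul, Polynomial.coeff_zero_eq_eval_zero]
  rcases eq_or_ne (σ * γ) 0 with h0 | h0
  · simp [hdot, h0]
  have hs'L : s' ᵥ* L = 0 := by
    rw [hs', smul_vecMul] at hs
    exact (smul_eq_zero.1 hs).resolve_left (left_ne_zero_of_mul h0)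
  have hLp' : L *ᵥ p' = 0 := by
    rw [hp', mulVec_smul] at hp
    exact (smul_eq_zero.1 hp).resolve_left (right_ne_zero_of_mul h0)
  rw [hdot, Int.natAbs_mul, mul_assoc, natAbs_dotProduct_mul_natCard_torsion hrank
    hs'L hLp' ((dotProduct_comm _ _).trans hse) hup, hq0, ← Int.natAbs_mul]

end IntegerMatrix

/-- matrix form of Lorenzini's formula / Theorem 1.2.
Let `L ∈ ℤ^{(ℓ+1)×(ℓ+1)}` have rank `ℓ` over `ℚ`, with `sᵀL = 0`, `Lp = 0`,
some entry of `s` equal to `1`, `γ = gcd(p)`, `d = sᵀp ≠ 0`, and characteristic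
polynomial `X·q(X)`. Then the torsion subgroup `K` of `ℤ^{ℓ+1}/(L·ℤ^{ℓ+1})` is
finite, and `|d| · #K = γ · |q(0)|`. -/
theorem stmt3 (ℓ : ℕ) (L : Matrix (Fin (ℓ + 1)) (Fin (ℓ + 1)) ℤ)
    (hrank : (L.map ((↑) : ℤ → ℚ)).rank = ℓ)
    (s p : Fin (ℓ + 1) → ℤ)
    (hs : Matrix.vecMul s L = 0) (hp : L.mulVec p = 0)
    (hs1 : ∃ i, s i = 1)
    (γ : ℕ) (hγ : (γ : ℤ) = Finset.univ.gcd p)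
    (d : ℤ) (hd : d = ∑ i, s i * p i) (hd0 : d ≠ 0)
    (q : Polynomial ℤ) (hq : L.charpoly = Polynomial.X * q) :
    Finite
      (Submodule.torsion ℤ
        ((Fin (ℓ + 1) → ℤ) ⧸ LinearMap.range (Matrix.mulVecLin L))) ∧
    d.natAbs *
        Nat.card
          (Submodule.torsion ℤ
            ((Fin (ℓ + 1) → ℤ) ⧸ LinearMap.range (Matrix.mulVecLin L))) =
      γ * (q.eval 0).natAbs := by
  have hσ : Finset.univ.gcd s = 1 := gcd_eq_one_of_exists_eq_one hs1
  simpa [hσ, ← hγ, hd, dotProduct, Int.natAbs_mul] using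
    stmt3_general L (by simpa using hrank) hs hp hq
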